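/- Let T = (V, root, par) be a leafless, narrow rooted directed tree. Then the bounded Cesàro operator C_T on ℓ²(V) is essentially equivalent to a subnormal operator: there exists a compact operator K on ℓ²(V) such that C_T + K is subnormal. -/

import Mathlib

noncomputable section

open scoped ENNReal

/-- A rooted directed tree encoded by a vertex set `V`, a root, and a parent map. -/
structure TreeData (V : Type) where
  root : V
  par : V → V
  par_root : par root = root
  hroot : ∀ v : V, ∃ n : ℕ, par^[n] v = root

namespace TreeData

variable {V : Type}

open scoped Classical in
/-- The depth of a vertex: the least `n` with `par^[n] v = root`. -/
def dep (T : TreeData V) (v : V) : ℕ := Nat.find (T.hroot v)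

/-- The Cesàro map `Λ_T`. -/
def cesaro (T : TreeData V) (f : V → ℂ) : V → ℂ := fun v =>
  ((T.dep v : ℂ) + 1)⁻¹ * ∑ j ∈ Finset.range (T.dep v + 1), f (T.par^[j] v)

/-- The `n`-th level `Chi^⟨n⟩(root)`: vertices of depth `n`. -/
def level (T : TreeData V) (n : ℕ) : Set V := {v : V | T.dep v = n}

/-- The set of children of a vertex. -/
def chi (T : TreeData V) (u : V) : Set V := {v : V | v ≠ T.root ∧ T.par v = u}

end TreeData

/-- The Hilbert space `ℓ²(V)` of square-summable complex functions on `V`. -/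
abbrev L2 (V : Type) : Type := lp (fun _ : V => ℂ) 2
/-- A witness to subnormality of a bounded operator `S` on a complex Hilbert space `H`:
a Hilbert space `K`, an isometric embedding `J : H → K`, and a bounded normal operator `N` on
`K` extending `S`. -/
structure SubnormalWitness {H : Type} [NormedAddCommGroup H] [InnerProductSpace ℂ H]
    [CompleteSpace H] (S : H →L[ℂ] H) where
  K : Type
  [grp : NormedAddCommGroup K]
  [ips : InnerProductSpace ℂ K]
  [cpl : CompleteSpace K]
  J : H →ₗᵢ[ℂ] K
  N : K →L[ℂ] K
  normal : ContinuousLinearMap.adjoint N * N = N * ContinuousLinearMap.adjoint N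
  intertwine : ∀ h : H, N (J h) = J (S h)

/-- A bounded operator on a complex Hilbert space is subnormal if it has a normal extension to
a larger Hilbert space. -/
def IsSubnormal {H : Type} [NormedAddCommGroup H] [InnerProductSpace ℂ H] [CompleteSpace H]
    (S : H →L[ℂ] H) : Prop :=
  Nonempty (SubnormalWitness S)


theorem l2_hasSum {V : Type} (f : L2 V) : HasSum (fun v => ‖f v‖ ^ 2) (‖f‖ ^ 2) := by
  have h := lp.hasSum_norm (p := 2) (by norm_num) f
  simpa using h

theorem l2_norm_le {V : Type} (g : L2 V) (u : V → ℝ) (A : ℝ) (hu : HasSum u A)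
    (h : ∀ v, ‖g v‖ ^ 2 ≤ u v) : ‖g‖ ^ 2 ≤ A :=
  hasSum_le h (l2_hasSum g) hu

theorem l2_compact {V : Type} (K : L2 V →L[ℂ] L2 V) (w : V → ℝ)
    (hw : Summable fun v => w v ^ 2) (h : ∀ f v, ‖K f v‖ ≤ w v * ‖f‖) :
    IsCompactOperator ⇑K := by
  classical
  let ev : V → L2 V →L[ℂ] ℂ := fun v => LinearMap.mkContinuous
    { toFun := fun f => f v, map_add' := fun _ _ => rfl, map_smul' := fun _ _ => rfl } 1
    (fun f => by
      rw [one_mul]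
      exact lp.norm_apply_le_norm (by norm_num) f v)
  let F : Finset V → L2 V →L[ℂ] L2 V := fun s =>
    ∑ i ∈ s, (lp.singleContinuousLinearMap ℂ (fun _ : V => ℂ) 2 i).comp ((ev i).comp K)
  have hFc : ∀ s, IsCompactOperator (F s) := by
    intro s
    refine Submodule.sum_mem (compactOperator (RingHom.id ℂ) (L2 V) (L2 V)) (f := fun i => ((lp.singleContinuousLinearMap ℂ (fun _ : V => ℂ) 2 i).comp ((ev i).comp K))) ?_
    intro i _
    change IsCompactOperator _
    have : IsCompactOperator (⇑((ev i).comp K)) :=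
      (isCompactOperator_id (E := ℂ)).comp_clm ((ev i).comp K)
    exact this.clm_comp (lp.singleContinuousLinearMap ℂ (fun _ : V => ℂ) 2 i)
  have hFa : ∀ s f v, (F s f) v = if v ∈ s then K f v else 0 := by
    intro s f v
    simp only [F, sum_apply]
    rw [lp.coeFn_sum, Finset.sum_apply]
    simp only [ContinuousLinearMap.comp_apply, lp.singleContinuousLinearMap_apply,
      lp.single_apply, Pi.single_apply]
    rw [Finset.sum_ite_eq]
    rfl
  refine isCompactOperator_of_tendsto (l := Filter.atTop) (F := F) ?_ (Filter.Eventually.of_forall hFc)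
  rw [tendsto_iff_norm_sub_tendsto_zero]
  have ht : Filter.Tendsto (fun s : Finset V => √(∑' v, w v ^ 2 - ∑ v ∈ s, w v ^ 2)) Filter.atTop (nhds 0) := by
    have := (hw.hasSum.const_sub (∑' v, w v ^ 2)).sqrt
    simpa using this
  refine squeeze_zero (fun _ => norm_nonneg _) (fun s => ?_) ht
  refine ContinuousLinearMap.opNorm_le_bound _ (Real.sqrt_nonneg _) fun f => ?_
  have hs : HasSum (fun v => if v ∈ s then 0 else w v ^ 2) (∑' v, w v ^ 2 - ∑ v ∈ s, w v ^ 2) := by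
    have h1 : HasSum (fun v => if v ∈ s then w v ^ 2 else 0) (∑ v ∈ s, w v ^ 2) := by
      have := hasSum_sum_of_ne_finset_zero (f := fun v => if v ∈ s then w v ^ 2 else 0) (s := s)
        (L := SummationFilter.unconditional V) (fun b hb => by simp [hb])
      convert this using 1
      exact Finset.sum_congr rfl fun v hv => by simp [hv]
    have h3 := hw.hasSum.sub h1
    have h4 : (fun v => if v ∈ s then 0 else w v ^ 2) =
        fun v => w v ^ 2 - if v ∈ s then w v ^ 2 else 0 := by
      funext v
      split_ifs <;> simp
    rw [h4]
    exact h3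
  have h2 := l2_norm_le ((F s - K) f) _ _ (hs.mul_right (‖f‖ ^ 2)) (fun v => by
    have : ((F s - K) f) v = F s f v - K f v := rfl
    rw [this, hFa]
    split_ifs
    · simp
    · have := h f v
      rw [← mul_pow, zero_sub, norm_neg]
      exact pow_le_pow_left₀ (norm_nonneg _) this 2)
  rw [← abs_of_nonneg (norm_nonneg ((F s - K) f)), ← abs_of_nonneg (norm_nonneg f)]
  rw [← Real.sqrt_sq_eq_abs, ← Real.sqrt_sq_eq_abs, ← Real.sqrt_mul']
  · exact Real.sqrt_le_sqrt h2
  · positivity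

theorem subnormal_of_isometry {H : Type} [NormedAddCommGroup H] [InnerProductSpace ℂ H]
    [CompleteSpace H] (A S : H →L[ℂ] H) (hS : ∀ x, ‖S x‖ = ‖x‖) (hA : ∀ x, A x = x - S x) :
    IsSubnormal A := by
  have hS1 : ∀ x, ContinuousLinearMap.adjoint S (S x) = x := fun x => by
    have := (ContinuousLinearMap.norm_map_iff_adjoint_comp_self S).1 hS
    exact congrArg (fun f => f x) this
  set R := ContinuousLinearMap.adjoint S with hR
  let e := WithLp.prodContinuousLinearEquiv 2 ℂ H H
  let fs : H × H →L[ℂ] H := ContinuousLinearMap.fst ℂ H H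
  let sn : H × H →L[ℂ] H := ContinuousLinearMap.snd ℂ H H
  let U : WithLp 2 (H × H) →L[ℂ] WithLp 2 (H × H) :=
    (e.symm : H × H →L[ℂ] WithLp 2 (H × H)).comp
      ((ContinuousLinearMap.prod (fs - (S.comp fs + sn - S.comp (R.comp sn))) (sn - R.comp sn)).comp
        (e : WithLp 2 (H × H) →L[ℂ] H × H))
  let U' : WithLp 2 (H × H) →L[ℂ] WithLp 2 (H × H) :=
    (e.symm : H × H →L[ℂ] WithLp 2 (H × H)).comp
      ((ContinuousLinearMap.prod (fs - R.comp fs) (sn - (fs - S.comp (R.comp fs) + S.comp sn))).comp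
        (e : WithLp 2 (H × H) →L[ℂ] H × H))
  have hU : ∀ x, U x = WithLp.toLp 2 (x.fst - (S x.fst + x.snd - S (R x.snd)), x.snd - R x.snd) :=
    fun x => rfl
  have hU' : ∀ x, U' x = WithLp.toLp 2 (x.fst - R x.fst, x.snd - (x.fst - S (R x.fst) + S x.snd)) :=
    fun x => rfl
  have hadj : U' = ContinuousLinearMap.adjoint U := by
    rw [ContinuousLinearMap.eq_adjoint_iff]
    intro x y
    rw [hU, hU']
    simp only [WithLp.prod_inner_apply, WithLp.ofLp_toLp, inner_sub_left, inner_sub_right, inner_add_left, inner_add_right]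
    simp only [hR, ContinuousLinearMap.adjoint_inner_left, ContinuousLinearMap.adjoint_inner_right]
    simp only [← ContinuousLinearMap.adjoint_inner_left, ContinuousLinearMap.adjoint_adjoint]
    simp only [WithLp.ofLp_fst, WithLp.ofLp_snd]
    ring
  refine ⟨{ K := WithLp 2 (H × H), J := ⟨(e.symm : H × H →ₗ[ℂ] WithLp 2 (H × H)).comp (LinearMap.inl ℂ H H), ?_⟩, N := U, normal := ?_, intertwine := ?_ }⟩
  · intro x
    change ‖WithLp.toLp 2 (x, (0:H))‖ = _
    simp
  · rw [← hadj]
    ext1 x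
    change U' (U x) = U (U' x)
    simp only [hU, hU', map_sub, map_add, hS1]
    congr 1
    ext1 <;> simp [hS1] <;> abel
  · intro h
    change U (WithLp.toLp 2 (h, (0:H))) = WithLp.toLp 2 (A h, (0:H))
    rw [hU, hA]
    simp

theorem ray_identity (x : ℝ) (hx : 0 < x) (z w : ℂ) :
    ‖((√(x / (x + 1)) : ℝ) : ℂ) * z - (((√(x * (x + 1)))⁻¹ : ℝ) : ℂ) * w‖ ^ 2 =
      ‖z‖ ^ 2 + ‖w‖ ^ 2 / x - ‖w + z‖ ^ 2 / (x + 1) := by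
  have ha : √(x / (x + 1)) ^ 2 = x / (x + 1) := Real.sq_sqrt (by positivity)
  have hb : ((√(x * (x + 1)))⁻¹) ^ 2 = (x * (x + 1))⁻¹ := by
    rw [inv_pow, Real.sq_sqrt (by positivity)]
  have hab : √(x / (x + 1)) * (√(x * (x + 1)))⁻¹ = (x + 1)⁻¹ := by
    rw [← Real.sqrt_inv, ← Real.sqrt_mul (by positivity)]
    rw [show x / (x + 1) * (x * (x + 1))⁻¹ = ((x + 1)⁻¹) ^ 2 by field_simp]
    exact Real.sqrt_sq (by positivity)
  generalize √(x / (x + 1)) = a at *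
  generalize (√(x * (x + 1)))⁻¹ = b at *
  simp only [Complex.sq_norm, Complex.normSq_apply, Complex.sub_re, Complex.sub_im, Complex.mul_re,
    Complex.mul_im, Complex.ofReal_re, Complex.ofReal_im, Complex.add_re, Complex.add_im]
  have : (a * z.re - 0 * z.im - (b * w.re - 0 * w.im)) * (a * z.re - 0 * z.im - (b * w.re - 0 * w.im)) +
      (a * z.im + 0 * z.re - (b * w.im + 0 * w.re)) * (a * z.im + 0 * z.re - (b * w.im + 0 * w.re))
      = a ^ 2 * (z.re ^ 2 + z.im ^ 2) + b ^ 2 * (w.re ^ 2 + w.im ^ 2)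
        - 2 * (a * b) * (z.re * w.re + z.im * w.im) := by ring
  rw [this, ha, hb, hab]
  field_simp
  ring

theorem coef_bounds (x : ℝ) (hx : 0 < x) :
    |1 - √(x / (x + 1)) - (x + 1)⁻¹| ≤ (x + 1)⁻¹ ∧
    |(√(x * (x + 1)))⁻¹ - (x + 1)⁻¹| ≤ x⁻¹ * (x + 1)⁻¹ := by
  have hc : (x + 1)⁻¹ = 1 - x / (x + 1) := by field_simp; ring
  have h0 : 0 < (x + 1)⁻¹ := by positivity
  have hx1 : x / (x + 1) ≤ 1 := by linarith
  constructor
  · have h1 : √(x / (x + 1)) ≤ 1 := by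
      rw [Real.sqrt_le_left (by norm_num)]; linarith
    have h2 : x / (x + 1) ≤ √(x / (x + 1)) := by
      apply Real.le_sqrt_of_sq_le
      have : 0 ≤ x / (x + 1) := by positivity
      nlinarith
    rw [abs_le]; constructor <;> linarith
  · have h1 : (√(x * (x + 1)))⁻¹ ≤ x⁻¹ := by
      apply inv_anti₀ hx
      apply Real.le_sqrt_of_sq_le; nlinarith
    have h2 : (x + 1)⁻¹ ≤ (√(x * (x + 1)))⁻¹ := by
      apply inv_anti₀ (by positivity)
      rw [Real.sqrt_le_left (by positivity)]; nlinarith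
    have h3 : x⁻¹ - (x + 1)⁻¹ = x⁻¹ * (x + 1)⁻¹ := by field_simp; ring
    rw [abs_le]; constructor <;> linarith [mul_pos (inv_pos.2 hx) h0]

namespace TreeData
variable {V : Type} (T : TreeData V)

theorem iter_dep (v : V) : T.par^[T.dep v] v = T.root := by
  classical
  exact Nat.find_spec (T.hroot v)

theorem dep_le {v : V} {n : ℕ} (h : T.par^[n] v = T.root) : T.dep v ≤ n := by
  classical
  exact Nat.find_min' (T.hroot v) h

theorem dep_eq_zero {v : V} (h : T.dep v = 0) : v = T.root := by
  have := T.iter_dep v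
  rwa [h] at this

theorem dep_root : T.dep T.root = 0 := Nat.le_zero.1 (T.dep_le rfl)

theorem dep_par {v : V} (h : v ≠ T.root) : T.dep v = T.dep (T.par v) + 1 := by
  apply le_antisymm
  · apply T.dep_le
    rw [Function.iterate_succ_apply]
    exact T.iter_dep _
  · obtain ⟨k, hk⟩ := Nat.exists_eq_succ_of_ne_zero (fun h0 => h (T.dep_eq_zero h0))
    have := T.iter_dep v
    rw [hk, Nat.succ_eq_add_one, Function.iterate_succ_apply] at this
    have := T.dep_le this
    omega

theorem dep_par' {v : V} {n : ℕ} (h : T.dep v = n + 1) : T.dep (T.par v) = n := by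
  have : v ≠ T.root := by
    rintro rfl
    rw [T.dep_root] at h; omega
  have := T.dep_par this
  omega

/-- partial sums along a ray -/
def sfun (N : ℕ) (f : V → ℂ) (v : V) : ℂ := ∑ j ∈ Finset.range (T.dep v - N), f (T.par^[j + 1] v)

/-- the isometry -/
def Sfun (N : ℕ) (f : V → ℂ) (v : V) : ℂ :=
  if N ≤ T.dep v then
    ((√((T.dep v : ℝ) / ((T.dep v : ℝ) + 1)) : ℝ) : ℂ) * f v
      - (((√((T.dep v : ℝ) * ((T.dep v : ℝ) + 1)))⁻¹ : ℝ) : ℂ) * T.sfun N f v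
  else f v

theorem sfun_succ (N : ℕ) (f : V → ℂ) {v : V} {n : ℕ} (h : T.dep v = n + 1) (hn : N ≤ n) :
    T.sfun N f v = T.sfun N f (T.par v) + f (T.par v) := by
  unfold sfun
  rw [T.dep_par' h, h, Nat.succ_sub hn, Nat.succ_eq_add_one, Finset.sum_range_succ']
  simp

theorem Sfun_norm (N : ℕ) (hN : 1 ≤ N) (f : V → ℂ) {v : V} {n : ℕ} (h : T.dep v = n) (hn : N ≤ n) :
    ‖T.Sfun N f v‖ ^ 2 = ‖f v‖ ^ 2 + ‖T.sfun N f v‖ ^ 2 / n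
      - ‖T.sfun N f v + f v‖ ^ 2 / (n + 1) := by
  unfold Sfun
  rw [if_pos (by omega), h]
  exact ray_identity n (by exact_mod_cast (by omega : 0 < n)) _ _

theorem K_bound (N : ℕ) (hN : 1 ≤ N) (f : V → ℂ) (B : ℝ) (hB : ∀ v, ‖f v‖ ≤ B) (v : V) :
    ‖f v - T.cesaro f v - T.Sfun N f v‖ ≤ (N + 2) * ((T.dep v : ℝ) + 1)⁻¹ * B := by
  have hB0 : 0 ≤ B := (norm_nonneg _).trans (hB v)
  have hsum : ∀ (k : ℕ) (g : ℕ → V), ‖∑ j ∈ Finset.range k, f (g j)‖ ≤ k * B := by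
    intro k g
    refine (norm_sum_le _ _).trans ?_
    refine (Finset.sum_le_sum fun j _ => hB (g j)).trans ?_
    simp
  set n := T.dep v with hn
  have hn1 : (0:ℝ) < (n:ℝ) + 1 := by positivity
  have hnc : ‖((n : ℂ) + 1)⁻¹‖ = ((n:ℝ) + 1)⁻¹ := by
    rw [norm_inv]
    congr 1
    have : ((n : ℂ) + 1) = ((n + 1 : ℕ) : ℂ) := by push_cast; rfl
    rw [this, Complex.norm_natCast]; push_cast; rfl
  unfold Sfun cesaro
  rw [← hn]
  split_ifs with h
  · have hn0 : (0:ℝ) < n := by exact_mod_cast (by omega : 0 < n)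
    obtain ⟨h1, h2⟩ := coef_bounds n hn0
    have hsplit : ∑ j ∈ Finset.range (n + 1), f (T.par^[j] v) =
        f v + T.sfun N f v + ∑ j ∈ Finset.range N, f (T.par^[n - N + 1 + j] v) := by
      rw [show n + 1 = (n - N + 1) + N by omega, Finset.sum_range_add, Finset.sum_range_succ']
      unfold sfun
      rw [← hn]
      simp [add_comm]
    rw [hsplit]
    set s := T.sfun N f v
    set r := ∑ j ∈ Finset.range N, f (T.par^[n - N + 1 + j] v)
    have hs : ‖s‖ ≤ n * B := by
      refine (hsum _ fun j => T.par^[j + 1] v).trans ?_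
      apply mul_le_mul_of_nonneg_right _ hB0
      exact_mod_cast Nat.sub_le _ _
    have hr : ‖r‖ ≤ N * B := hsum _ _
    set a := √((n:ℝ) / (n + 1))
    set b := (√((n:ℝ) * (n + 1)))⁻¹
    have e : f v - ((n:ℂ) + 1)⁻¹ * (f v + s + r) - ((a:ℂ) * f v - (b:ℂ) * s) =
        ((1 - a - ((n:ℝ) + 1)⁻¹ : ℝ) : ℂ) * f v + ((b - ((n:ℝ) + 1)⁻¹ : ℝ) : ℂ) * s
          - ((n:ℂ) + 1)⁻¹ * r := by
      push_cast; ring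
    rw [e]
    have t1 : ‖((1 - a - ((n:ℝ) + 1)⁻¹ : ℝ) : ℂ) * f v‖ ≤ ((n:ℝ) + 1)⁻¹ * B := by
      rw [norm_mul, Complex.norm_real]
      exact mul_le_mul h1 (hB v) (norm_nonneg _) (by positivity)
    have t2 : ‖((b - ((n:ℝ) + 1)⁻¹ : ℝ) : ℂ) * s‖ ≤ ((n:ℝ) + 1)⁻¹ * B := by
      rw [norm_mul, Complex.norm_real]
      refine (mul_le_mul h2 hs (norm_nonneg _) (by positivity)).trans (le_of_eq ?_)
      field_simp
    have t3 : ‖((n:ℂ) + 1)⁻¹ * r‖ ≤ ((n:ℝ) + 1)⁻¹ * (N * B) := by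
      rw [norm_mul, hnc]
      exact mul_le_mul_of_nonneg_left hr (by positivity)
    calc _ ≤ _ := (norm_sub_le _ _).trans (add_le_add_left (norm_add_le _ _) _)
      _ ≤ _ := by linarith
  · rw [sub_sub_cancel_left, norm_neg, norm_mul, hnc]
    have := hsum (n + 1) (fun j => T.par^[j] v)
    have h3 : ((n + 1 : ℕ) : ℝ) ≤ N + 2 := by
      have : n + 1 ≤ N + 2 := by omega
      exact_mod_cast this
    calc _ ≤ ((n:ℝ) + 1)⁻¹ * ((N + 2) * B) :=
          mul_le_mul_of_nonneg_left (this.trans (mul_le_mul_of_nonneg_right h3 hB0)) (by positivity)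
      _ = _ := by ring

/-- levels as finsets -/
structure Lev (L : ℕ → Finset V) (N : ℕ) : Prop where
  mem : ∀ n v, v ∈ L n ↔ T.dep v = n
  inj : ∀ n, N ≤ n → Set.InjOn T.par (L (n + 1))
  surj : ∀ n, Set.SurjOn T.par (L (n + 1)) (L n)

theorem exists_lev (hleafless : ∀ u : V, (T.chi u).Nonempty)
    (m : ℕ) (hm : ∀ n : ℕ, (T.level n).encard ≤ m) :
    ∃ L N, 1 ≤ N ∧ T.Lev L N ∧ ∀ n, (L n).card ≤ m := by
  have hfin : ∀ n, (T.level n).Finite := fun n =>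
    Set.finite_of_encard_le_coe (hm n)
  let L : ℕ → Finset V := fun n => (hfin n).toFinset
  have hmem : ∀ n v, v ∈ L n ↔ T.dep v = n := fun n v => by simp [L, level]
  have hcard : ∀ n, (L n).card ≤ m := fun n => by
    have := hm n
    rw [(hfin n).encard_eq_coe_toFinset_card] at this
    exact_mod_cast this
  have hsurj : ∀ n, Set.SurjOn T.par (L (n + 1)) (L n) := by
    intro n u hu
    obtain ⟨v, hv1, hv2⟩ := hleafless u
    refine ⟨v, ?_, hv2⟩
    rw [Finset.mem_coe, hmem] at *
    rw [T.dep_par hv1, hv2, hu]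
  have hmaps : ∀ n, Set.MapsTo T.par (L (n + 1)) (L n) := by
    intro n u hu
    rw [Finset.mem_coe, hmem] at *
    exact T.dep_par' hu
  have hmono : Monotone fun n => (L n).card :=
    monotone_nat_of_le_succ fun n => Finset.card_le_card_of_surjOn _ (hsurj n)
  obtain ⟨N, hN⟩ : ∃ N, ∀ n, N ≤ n → (L n).card = (L N).card := by
    have hb : BddAbove (Set.range fun n => (L n).card) := ⟨m, by rintro _ ⟨n, rfl⟩; exact hcard n⟩
    obtain ⟨N, hN⟩ := Nat.sSup_mem (Set.range_nonempty _) hb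
    refine ⟨N, fun n hn => le_antisymm ?_ (hmono hn)⟩
    dsimp only at hN
    rw [hN]
    exact le_csSup hb ⟨n, rfl⟩
  refine ⟨L, N + 1, by omega, ⟨hmem, fun n hn => ?_, hsurj⟩, hcard⟩
  apply Finset.injOn_of_surjOn_of_card_le _ (hmaps n) (hsurj n)
  rw [hN n (by omega), hN (n + 1) (by omega)]

variable {T}

theorem Lev.sum {L : ℕ → Finset V} {N : ℕ} (h : T.Lev L N) {n : ℕ} (hn : N ≤ n) (F : V → ℝ) :
    ∑ v ∈ L (n + 1), F (T.par v) = ∑ v ∈ L n, F v := by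
  refine Finset.sum_nbij T.par ?_ (h.inj n hn) (h.surj n) (fun _ _ => rfl)
  intro a ha
  rw [h.mem] at *
  exact T.dep_par' ha

theorem Lev.tendsto {L : ℕ → Finset V} {N : ℕ} (h : T.Lev L N) {F : V → ℝ} {A : ℝ}
    (hF : HasSum F A) :
    Filter.Tendsto (fun M => ∑ n ∈ Finset.range M, ∑ v ∈ L n, F v) Filter.atTop (nhds A) := by
  classical
  have hd : ∀ M, ∑ n ∈ Finset.range M, ∑ v ∈ L n, F v =
      ∑ v ∈ (Finset.range M).biUnion L, F v := by
    intro M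
    rw [Finset.sum_biUnion]
    intro i _ j _ hij
    rw [Function.onFun, Finset.disjoint_left]
    intro v hv hv'
    rw [h.mem] at hv hv'
    exact hij (hv.symm.trans hv')
  simp only [hd]
  have hF' : Filter.Tendsto (fun s : Finset V => ∑ v ∈ s, F v) Filter.atTop (nhds A) := hF
  refine hF'.comp (?_ : Filter.Tendsto (fun M => (Finset.range M).biUnion L) _ _)
  refine Filter.tendsto_atTop_finset_of_monotone ?_ ?_
  · intro a b hab
    exact Finset.biUnion_subset_biUnion_of_subset_left _ (Finset.range_mono hab)
  · intro v
    refine ⟨T.dep v + 1, ?_⟩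
    rw [Finset.mem_biUnion]
    exact ⟨T.dep v, by simp, (h.mem _ _).2 rfl⟩

theorem Lev.summable {L : ℕ → Finset V} {N : ℕ} (h : T.Lev L N) {m : ℕ}
    (hm : ∀ n, (L n).card ≤ m) (c : ℝ) :
    Summable fun v => (c * ((T.dep v : ℝ) + 1)⁻¹) ^ 2 := by
  classical
  have hs : Summable fun n : ℕ => (m : ℝ) * (c * ((n : ℝ) + 1)⁻¹) ^ 2 := by
    have h1 : Summable fun n : ℕ => 1 / ((n + 1 : ℕ) : ℝ) ^ 2 :=
      (summable_nat_add_iff 1).2 (Real.summable_one_div_nat_pow.2 (by norm_num))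
    refine (h1.mul_left ((m:ℝ) * c ^ 2)).congr fun n => ?_
    push_cast
    field_simp
  refine summable_of_sum_le (c := ∑' n : ℕ, (m : ℝ) * (c * ((n : ℝ) + 1)⁻¹) ^ 2)
    (fun v => sq_nonneg _) fun u => ?_
  calc _ ≤ ∑ n ∈ u.image T.dep, ∑ v ∈ L n, (c * ((T.dep v : ℝ) + 1)⁻¹) ^ 2 := by
        rw [← Finset.sum_fiberwise_of_maps_to (t := u.image T.dep) (g := T.dep)
          (fun x hx => Finset.mem_image_of_mem _ hx)]
        refine Finset.sum_le_sum fun n _ => ?_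
        refine Finset.sum_le_sum_of_subset_of_nonneg ?_ fun _ _ _ => sq_nonneg _
        intro v hv
        rw [h.mem]
        exact (Finset.mem_filter.1 hv).2
    _ ≤ ∑ n ∈ u.image T.dep, (m : ℝ) * (c * ((n : ℝ) + 1)⁻¹) ^ 2 := by
        refine Finset.sum_le_sum fun n _ => ?_
        rw [Finset.sum_congr rfl (g := fun _ => (c * ((n : ℝ) + 1)⁻¹) ^ 2)
          (fun v hv => by rw [(h.mem n v).1 hv]), Finset.sum_const, nsmul_eq_mul]
        exact mul_le_mul_of_nonneg_right (by exact_mod_cast hm n) (sq_nonneg _)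
    _ ≤ _ := hs.sum_le_tsum _ fun n _ => by positivity

theorem Lev.isometry {L : ℕ → Finset V} {N : ℕ} (h : T.Lev L N) (hN : 1 ≤ N) (f g : L2 V)
    (D : ℕ) (hD : ∀ v, D ≤ T.dep v → f v = 0) (hg : ∀ v, g v = T.Sfun N f v) : ‖g‖ = ‖f‖ := by
  let W : ℕ → ℝ := fun n => ∑ v ∈ L n, ‖T.sfun N f v‖ ^ 2
  have hW : ∀ n, N ≤ n → W (n + 1) = ∑ v ∈ L n, ‖T.sfun N f v + f v‖ ^ 2 := by
    intro n hn
    rw [← h.sum hn]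
    refine Finset.sum_congr rfl fun v hv => ?_
    rw [T.sfun_succ N f ((h.mem _ _).1 hv) hn]
  have hW0 : ∀ n, n ≤ N → W n = 0 := by
    intro n hn
    refine Finset.sum_eq_zero fun v hv => ?_
    have : T.dep v - N = 0 := by rw [(h.mem _ _).1 hv]; omega
    simp [sfun, this]
  have hWc : ∀ n, max N D ≤ n → W n = W (max N D) := by
    intro n hn
    induction n, hn using Nat.le_induction with
    | base => rfl
    | succ n hn ih =>
      rw [← ih, hW n (le_trans (le_max_left _ _) hn)]
      refine Finset.sum_congr rfl fun v hv => ?_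
      rw [hD v, add_zero]
      rw [(h.mem _ _).1 hv]
      exact (le_max_right _ _).trans hn
  have hlev : ∀ n, ∑ v ∈ L n, ‖g v‖ ^ 2 = ∑ v ∈ L n, ‖f v‖ ^ 2 + W n / n - W (n + 1) / (n + 1 : ℕ) := by
    intro n
    by_cases hn : N ≤ n
    · rw [hW n hn]
      simp only [W, Finset.sum_div]
      rw [← Finset.sum_add_distrib, ← Finset.sum_sub_distrib]
      refine Finset.sum_congr rfl fun v hv => ?_
      rw [hg, T.Sfun_norm N hN f ((h.mem _ _).1 hv) hn]
      push_cast; rfl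
    · rw [hW0 n (by omega), hW0 (n + 1) (by omega)]
      simp only [zero_div, add_zero, sub_zero]
      refine Finset.sum_congr rfl fun v hv => ?_
      rw [hg, Sfun, if_neg]
      rw [(h.mem _ _).1 hv]; exact hn
  have hsum : ∀ M, ∑ n ∈ Finset.range M, ∑ v ∈ L n, ‖g v‖ ^ 2 =
      ∑ n ∈ Finset.range M, ∑ v ∈ L n, ‖f v‖ ^ 2 - W M / M := by
    intro M
    induction M with
    | zero => simp
    | succ M ih =>
      rw [Finset.sum_range_succ, Finset.sum_range_succ, ih, hlev]
      ring
  have t1 := h.tendsto (l2_hasSum g)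
  have t2 := h.tendsto (l2_hasSum f)
  have t3 : Filter.Tendsto (fun M : ℕ => W M / M) Filter.atTop (nhds 0) := by
    refine (tendsto_const_div_atTop_nhds_zero_nat (W (max N D))).congr' ?_
    filter_upwards [Filter.eventually_ge_atTop (max N D)] with n hn
    rw [hWc n hn]
  have t4 := t2.sub t3
  simp only [← hsum, sub_zero] at t4
  have := tendsto_nhds_unique t1 t4
  exact (sq_eq_sq₀ (norm_nonneg _) (norm_nonneg _)).1 this

end TreeData

theorem cesaro_essentially_subnormal {V : Type} [Countable V] [Infinite V]
    (T : TreeData V)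
    (hleafless : ∀ u : V, (T.chi u).Nonempty)
    (m : ℕ) (hm : ∀ n : ℕ, (T.level n).encard ≤ m)
    (C : L2 V →L[ℂ] L2 V) (hC : ∀ (f : L2 V) (v : V), C f v = T.cesaro ⇑f v) :
    ∃ K : L2 V →L[ℂ] L2 V, IsCompactOperator ⇑K ∧ IsSubnormal (C + K) := by
  classical
  obtain ⟨L, N, hN, hL, hcard⟩ := T.exists_lev hleafless m hm
  let w : V → ℝ := fun v => (N + 2) * ((T.dep v : ℝ) + 1)⁻¹
  have hw : Summable fun v => w v ^ 2 := hL.summable hcard (N + 2)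
  let k : (V → ℂ) → V → ℂ := fun f v => f v - T.cesaro f v - T.Sfun N f v
  have hk : ∀ (f : L2 V) v, ‖k f v‖ ≤ w v * ‖f‖ := fun f v =>
    T.K_bound N hN f ‖f‖ (fun u => lp.norm_apply_le_norm (by norm_num) f u) v
  have hk2 : ∀ (f : L2 V) v, ‖k f v‖ ^ 2 ≤ w v ^ 2 * ‖f‖ ^ 2 := fun f v => by
    rw [← mul_pow]
    exact pow_le_pow_left₀ (norm_nonneg _) (hk f v) 2
  have hmem : ∀ f : L2 V, Memℓp (k f) 2 := fun f => by
    refine memℓp_gen ?_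
    have := Summable.of_nonneg_of_le (fun v => sq_nonneg _) (hk2 f) (hw.mul_right _)
    simpa using this
  have hadd : ∀ f g : V → ℂ, k (f + g) = k f + k g := by
    intro f g
    ext v
    simp only [k, TreeData.cesaro, TreeData.Sfun, TreeData.sfun, Pi.add_apply,
      Finset.sum_add_distrib]
    split_ifs <;> ring
  have hsmul : ∀ (c : ℂ) (f : V → ℂ), k (c • f) = c • k f := by
    intro c f
    ext v
    simp only [k, TreeData.cesaro, TreeData.Sfun, TreeData.sfun, Pi.smul_apply, smul_eq_mul,
      ← Finset.mul_sum]
    split_ifs <;> ring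
  let Kl : L2 V →ₗ[ℂ] L2 V :=
    { toFun := fun f => ⟨k f, hmem f⟩
      map_add' := fun f g => by
        apply lp.ext
        exact hadd f g
      map_smul' := fun c f => by
        apply lp.ext
        exact hsmul c f }
  let K : L2 V →L[ℂ] L2 V := Kl.mkContinuous (√(∑' v, w v ^ 2)) (fun f => by
    have h2 := l2_norm_le (Kl f) _ _ (hw.hasSum.mul_right (‖f‖ ^ 2)) (hk2 f)
    rw [← abs_of_nonneg (norm_nonneg (Kl f)), ← abs_of_nonneg (norm_nonneg f)]
    rw [← Real.sqrt_sq_eq_abs, ← Real.sqrt_sq_eq_abs, ← Real.sqrt_mul']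
    · exact Real.sqrt_le_sqrt h2
    · positivity)
  have hK : ∀ f v, K f v = k f v := fun f v => rfl
  refine ⟨K, l2_compact K w hw hk, ?_⟩
  let S : L2 V →L[ℂ] L2 V := 1 - C - K
  have hS : ∀ (f : L2 V) v, S f v = T.Sfun N f v := by
    intro f v
    have : S f v = f v - C f v - K f v := rfl
    rw [this, hC, hK]
    simp only [k]
    ring
  refine subnormal_of_isometry _ S (fun f => ?_) (fun f => ?_)
  · have h1 := lp.hasSum_single (p := 2) (by norm_num) f
    have h2 : Filter.Tendsto (fun s : Finset V => ∑ i ∈ s, lp.single 2 i (f i)) Filter.atTop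
      (nhds f) := h1
    have h3 := ((S.continuous.tendsto f).comp h2).norm
    have h4 := h2.norm
    refine tendsto_nhds_unique h3 (h4.congr fun s => ?_)
    refine (hL.isometry hN _ _ (s.sup T.dep + 1) ?_ (hS _)).symm
    intro v hv
    rw [lp.coeFn_sum, Finset.sum_apply]
    refine Finset.sum_eq_zero fun i hi => ?_
    apply lp.single_apply_ne
    rintro rfl
    have := Finset.le_sup (f := T.dep) hi
    omega
  · change C f + K f = f - (f - C f - K f)
    abel
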